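/- Let ε ∈ (0,1) and let u be a λ-mode solution whose initial data (φ,ψ) are smooth on (2M,∞) and vanish for r ≤ 2M + ε. Then the forward radiation field of u at the event horizon exists and vanishes in the far past: there exists a continuous function f : ℝ → ℝ such that for every τ ∈ ℝ, ∂ₜu(τ − r_*(r), r) → f(τ) as r → 2M from the right, and f(τ) = 0 for all τ ≤ r_*(2M+ε) = 2M + ε + 2M·log ε. (Existence of the event-horizon component of the radiation field for data supported away from the horizon, together with its vanishing for τ ≤ 2M + ε + 2M·log ε by finite speed of propagation, for a single spherical-harmonic mode.) -/

import Mathlib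

/-!
Set `w = r u` and use the characteristic coordinates `p = t + r_*`, `q = t - r_*`. The mode equation
becomes `∂²w/∂p∂q = V w`, where `V` decays like `exp ((p - q) / (4M))` because `r - 2M` is
exponentially small in `r_*` near the horizon (`charSystem_of_isModeSolution`,
`abs_modePotential_le`). The horizon is `q → ∞` with `p = τ` fixed.

On each region `{p ≤ p₁, p + q ≥ 0}` the data are bounded by a multiple of `exp (Λ p)`, since they
vanish for `p ≤ p₀ = r_*(2M + ε)` and are continuous. For `Λ` large the weighted supremum of `w`
over characteristic triangles is controlled by that of the data (`CharSystem.abs_w_le`), because the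
`q`-integral of `V` is bounded and integrating `exp (Λ p)` in `p` gains a factor `1 / Λ`. Hence
`∂q ∂p w = V w` is `O(exp (-q / (4M)))`, so `∂w/∂p` converges as `q → ∞`, locally uniformly in `p`, and
its limit `g` is continuous (`CharSystem.exists_trace`); and `∂w/∂q → 0`, being the integral in `p` of
the same small source over an interval of length `p + q` (`CharSystem.tendsto_Q`). Since
`r ∂ₜu = ∂w/∂p + ∂w/∂q`, the radiation field is `g / (2M)`. With `p₁ = p₀` the data vanish, so the
same estimate with zero constant gives finite speed of propagation and `g = 0` on `p ≤ p₀`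
(`CharSystem.P_eq_zero`).
-/

open MeasureTheory Filter Set Function
open scoped ContDiff

/-- The tortoise coordinate `r_* = r + 2M log(r - 2M)`. -/
noncomputable def rstar (M r : ℝ) : ℝ := r + 2*M*Real.log (r - 2*M)

/-- Partial derivative of `u` in the first (time) variable. -/
noncomputable def pdt (u : ℝ → ℝ → ℝ) (t r : ℝ) : ℝ := deriv (fun s => u s r) t

/-- Second partial derivative of `u` in the first (time) variable. -/
noncomputable def pdtt (u : ℝ → ℝ → ℝ) (t r : ℝ) : ℝ := deriv (fun s => pdt u s r) t

/-- Partial derivative of `u` in the second (radial) variable. -/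
noncomputable def pdr (u : ℝ → ℝ → ℝ) (t r : ℝ) : ℝ := deriv (fun s => u t s) r

/-- Second partial derivative of `u` in the second (radial) variable. -/
noncomputable def pdrr (u : ℝ → ℝ → ℝ) (t r : ℝ) : ℝ := deriv (fun s => pdr u t s) r

/-- `u(t,r)` is a λ-mode solution of the wave equation on the mass-`M`
Schwarzschild exterior: it is smooth on `ℝ × (2M,∞)` and satisfies
`−(r/(r−2M))·∂²ₜu + ((r−2M)/r)·∂²ᵣu + (2(r−M)/r²)·∂ᵣu − (λ²/r²)·u = 0` there. -/
def IsModeSolution (M lam : ℝ) (u : ℝ → ℝ → ℝ) : Prop :=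
  ContDiffOn ℝ ∞ (Function.uncurry u) ((Set.univ : Set ℝ) ×ˢ Set.Ioi (2*M)) ∧
  ∀ t r : ℝ, 2*M < r →
    -(r/(r-2*M)) * pdtt u t r + ((r-2*M)/r) * pdrr u t r
      + (2*(r-M)/r^2) * pdr u t r - lam^2/r^2 * u t r = 0

/-- `f` is a forward radiation field of `u` at the event horizon:
`∂ₜu(τ − r_*(r), r) → f(τ)` as `r → 2M⁺`. -/
def IsFwdRadHorizon (M : ℝ) (u : ℝ → ℝ → ℝ) (f : ℝ → ℝ) : Prop :=
  ∀ τ : ℝ, Filter.Tendsto (fun r => pdt u (τ - rstar M r) r)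
    (nhdsWithin (2*M) (Set.Ioi (2*M))) (nhds (f τ))

/-- `f` is a backward radiation field of `u` at the event horizon:
`∂ₜu(τ + r_*(r), r) → f(τ)` as `r → 2M⁺`. -/
def IsBwdRadHorizon (M : ℝ) (u : ℝ → ℝ → ℝ) (f : ℝ → ℝ) : Prop :=
  ∀ τ : ℝ, Filter.Tendsto (fun r => pdt u (τ + rstar M r) r)
    (nhdsWithin (2*M) (Set.Ioi (2*M))) (nhds (f τ))

/-- `g` is a forward radiation field of `u` at null infinity:
`r·∂ₜu(τ̄ + r_*(r), r) → g(τ̄)` as `r → ∞`. -/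
def IsFwdRadInfty (M : ℝ) (u : ℝ → ℝ → ℝ) (g : ℝ → ℝ) : Prop :=
  ∀ τ : ℝ, Filter.Tendsto (fun r => r * pdt u (τ + rstar M r) r)
    Filter.atTop (nhds (g τ))

/-- `g` is a backward radiation field of `u` at null infinity:
`r·∂ₜu(τ̄ − r_*(r), r) → g(τ̄)` as `r → ∞`. -/
def IsBwdRadInfty (M : ℝ) (u : ℝ → ℝ → ℝ) (g : ℝ → ℝ) : Prop :=
  ∀ τ : ℝ, Filter.Tendsto (fun r => r * pdt u (τ - rstar M r) r)
    Filter.atTop (nhds (g τ))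

/-! ### Linear wave equations in characteristic coordinates -/

/-- Comparison: if `|f'| ≤ G'` on `[a, b]` and `|f a| ≤ G a`, then `|f b| ≤ G b`. -/
lemma abs_le_of_abs_deriv_le {f f' G G' : ℝ → ℝ} {a b : ℝ} (hab : a ≤ b)
    (hf : ∀ x, HasDerivAt f (f' x) x) (hG : ∀ x, HasDerivAt G (G' x) x)
    (ha : |f a| ≤ G a) (h : ∀ x ∈ Icc a b, |f' x| ≤ G' x) : |f b| ≤ G b := by
  refine image_norm_le_of_norm_deriv_right_le_deriv_boundary (f := f) (f' := f')
    (fun x _ => (hf x).continuousAt.continuousWithinAt) (fun x _ => (hf x).hasDerivWithinAt)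
    ha hG (fun x hx => h x (Ico_subset_Icc_self hx)) (right_mem_Icc.2 hab)

/-- A linear wave equation in characteristic coordinates `p = t + s`, `q = t - s`, written as a
first-order system for `w`, `P = ∂w/∂p` and `Q = ∂w/∂q`, with a potential `V` that decays
exponentially towards the horizon `q → ∞`. -/
structure CharSystem (A κ : ℝ) (V w P Q : ℝ → ℝ → ℝ) : Prop where
  A_nonneg : 0 ≤ A
  κ_pos : 0 < κ
  V_le : ∀ p q, |V p q| ≤ A * Real.exp (κ * (p - q))
  w_cont : Continuous (uncurry w)
  P_cont : Continuous (uncurry P)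
  w_p : ∀ p q, HasDerivAt (fun x => w x q) (P p q) p
  P_q : ∀ p q, HasDerivAt (fun y => P p y) (V p q * w p q) q
  Q_p : ∀ p q, HasDerivAt (fun x => Q x q) (V p q * w p q) p

namespace CharSystem

variable {A κ : ℝ} {V w P Q : ℝ → ℝ → ℝ}

lemma abs_source_le (S : CharSystem A κ V w P Q) {N Λ p q : ℝ}
    (hw : |w p q| ≤ N * Real.exp (Λ * p)) :
    |V p q * w p q| ≤ A * Real.exp (κ * (p - q)) * (N * Real.exp (Λ * p)) := by
  rw [abs_mul]
  exact mul_le_mul (S.V_le p q) hw (abs_nonneg _)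
    (mul_nonneg S.A_nonneg (Real.exp_pos _).le)

/-- Integrating `∂P/∂q = V w` from the initial line `p + q = 0`: a weighted bound on `w` gives a
weighted bound on `P`, because the exponential decay makes the `q`-integral of `V` bounded. -/
lemma abs_P_le (S : CharSystem A κ V w P Q) {p₁ C Λ N p q : ℝ} (hp : p ≤ p₁) (hpq : 0 ≤ p + q)
    (hN : 0 ≤ N) (hP : |P p (-p)| ≤ C * Real.exp (Λ * p))
    (hw : ∀ y ∈ Icc (-p) q, |w p y| ≤ N * Real.exp (Λ * p)) :
    |P p q| ≤ (C + N * (A / κ * Real.exp (2 * κ * p₁))) * Real.exp (Λ * p) := by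
  have hκ := S.κ_pos
  have key := abs_le_of_abs_deriv_le (f := fun y => P p y) (f' := fun y => V p y * w p y)
    (G := fun y => C * Real.exp (Λ * p) + N * Real.exp (Λ * p) * (A / κ) *
      (Real.exp (2 * κ * p) - Real.exp (κ * (p - y))))
    (G' := fun y => A * Real.exp (κ * (p - y)) * (N * Real.exp (Λ * p)))
    (a := -p) (b := q) (by linarith) (S.P_q p) ?_ ?_ ?_
  · refine key.trans ?_
    have h1 : Real.exp (2 * κ * p) - Real.exp (κ * (p - q)) ≤ Real.exp (2 * κ * p₁) := by
      have : Real.exp (2 * κ * p) ≤ Real.exp (2 * κ * p₁) := by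
        apply Real.exp_le_exp.2; nlinarith
      linarith [Real.exp_pos (κ * (p - q))]
    have h2 : 0 ≤ N * Real.exp (Λ * p) * (A / κ) :=
      mul_nonneg (mul_nonneg hN (Real.exp_pos _).le) (div_nonneg S.A_nonneg hκ.le)
    have h3 := mul_le_mul_of_nonneg_left h1 h2
    linarith
  · intro y
    have h1 : HasDerivAt (fun y => Real.exp (κ * (p - y)))
        (Real.exp (κ * (p - y)) * (κ * (-1))) y :=
      (((hasDerivAt_id y).const_sub p).const_mul κ).exp
    refine ((((h1.const_sub (Real.exp (2 * κ * p))).const_mul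
      (N * Real.exp (Λ * p) * (A / κ))).const_add (C * Real.exp (Λ * p)))).congr_deriv ?_
    field_simp
  · have : κ * (p + p) = 2 * κ * p := by ring
    simpa [this] using hP
  · intro y hy
    exact S.abs_source_le (hw y hy)

/-- A priori estimate in the domain of dependence of `{p ≤ p₁}`: data bounded by a multiple of the
weight `exp (Λ p)` give a solution bounded by a multiple of the same weight. For `Λ` large the
weight makes the Duhamel term a contraction, so the supremum of `|w| exp (-Λ p)` over a compact
characteristic triangle is controlled by the data uniformly in the triangle. -/
lemma abs_w_le (S : CharSystem A κ V w P Q) {p₁ C Λ : ℝ} (hC : 0 ≤ C) (hΛ : 1 ≤ Λ)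
    (hΛ' : 2 * (A / κ * Real.exp (2 * κ * p₁)) ≤ Λ)
    (hw₀ : ∀ p ≤ p₁, |w p (-p)| ≤ C * Real.exp (Λ * p))
    (hP₀ : ∀ p ≤ p₁, |P p (-p)| ≤ C * Real.exp (Λ * p))
    {p q : ℝ} (hp : p ≤ p₁) (hpq : 0 ≤ p + q) :
    |w p q| ≤ 4 * C * Real.exp (Λ * p) := by
  set B := A / κ * Real.exp (2 * κ * p₁) with hB
  let T : Set (ℝ × ℝ) := (Icc (-q) p₁ ×ˢ Icc (-p₁) q) ∩ {z | 0 ≤ z.1 + z.2}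
  have hT : IsCompact T := (isCompact_Icc.prod isCompact_Icc).inter_right
    (isClosed_le continuous_const (continuous_fst.add continuous_snd))
  have hmem : (p, q) ∈ T := ⟨⟨⟨by simp; linarith, hp⟩, ⟨by simp; linarith, le_rfl⟩⟩, hpq⟩
  have hcont : Continuous (fun z : ℝ × ℝ => |uncurry w z| * Real.exp (-(Λ * z.1))) :=
    S.w_cont.abs.mul (by fun_prop)
  obtain ⟨⟨a, b⟩, hab, hmax⟩ := hT.exists_isMaxOn ⟨_, hmem⟩ hcont.continuousOn
  set N := |w a b| * Real.exp (-(Λ * a)) with hN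
  have hN0 : 0 ≤ N := by positivity
  have hwN : ∀ x y, (x, y) ∈ T → |w x y| ≤ N * Real.exp (Λ * x) := by
    intro x y hxy
    have h1 : |w x y| * Real.exp (-(Λ * x)) ≤ N := hmax hxy
    have h2 := mul_le_mul_of_nonneg_right h1 (Real.exp_pos (Λ * x)).le
    rwa [mul_assoc, ← Real.exp_add, neg_add_cancel, Real.exp_zero, mul_one] at h2
  obtain ⟨⟨⟨ha1, ha2⟩, ⟨hb1, hb2⟩⟩, hab0⟩ := hab
  simp only [Set.mem_ofPred_eq] at ha1 ha2 hb1 hb2 hab0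
  have hB0 : 0 ≤ B := mul_nonneg (div_nonneg S.A_nonneg S.κ_pos.le) (Real.exp_pos _).le
  have hΛ0 : 0 < Λ := by linarith
  -- the weighted maximum is attained at `(a, b)`; integrate `P` up to that point
  have hwab := abs_le_of_abs_deriv_le (f := fun x => w x b) (f' := fun x => P x b)
    (G := fun x => C * Real.exp (Λ * (-b)) +
      (C + N * B) / Λ * (Real.exp (Λ * x) - Real.exp (Λ * (-b))))
    (G' := fun x => (C + N * B) * Real.exp (Λ * x))
    (a := -b) (b := a) (by linarith) (fun x => S.w_p x b) ?_ ?_ ?_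
  · have h1 : Real.exp (Λ * (-b)) ≤ Real.exp (Λ * a) := by
      apply Real.exp_le_exp.2; nlinarith
    have h2 : 0 ≤ (C + N * B) / Λ := by positivity
    have h3 : |w a b| ≤ (C + (C + N * B) / Λ) * Real.exp (Λ * a) := by
      refine hwab.trans ?_
      have := mul_le_mul_of_nonneg_left h1 hC
      have := mul_nonneg h2 (Real.exp_pos (Λ * (-b))).le
      linarith
    have h4 : N ≤ C + (C + N * B) / Λ := by
      have h := mul_le_mul_of_nonneg_right h3 (Real.exp_pos (-(Λ * a))).le
      rwa [mul_assoc, ← Real.exp_add, add_neg_cancel, Real.exp_zero, mul_one] at h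
    have h5 : (C + N * B) / Λ ≤ C + N / 2 := by
      rw [div_le_iff₀ hΛ0]
      nlinarith
    have h6 : N ≤ 4 * C := by linarith
    exact (hwN p q hmem).trans (mul_le_mul_of_nonneg_right h6 (Real.exp_pos _).le)
  · intro x
    have h1 : HasDerivAt (fun y => Real.exp (Λ * y)) (Real.exp (Λ * x) * (Λ * 1)) x :=
      ((hasDerivAt_id x).const_mul Λ).exp
    refine (((h1.sub_const (Real.exp (Λ * (-b)))).const_mul
      ((C + N * B) / Λ)).const_add (C * Real.exp (Λ * (-b)))).congr_deriv ?_
    field_simp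
  · have := hw₀ (-b) (by linarith)
    simpa using this
  · intro x hx
    have hx1 : x ≤ p₁ := hx.2.trans ha2
    refine S.abs_P_le hx1 (by linarith [hx.1]) hN0 (hP₀ x hx1) fun y hy => hwN x y ?_
    exact ⟨⟨⟨by simp; linarith [hx.1], hx1⟩, ⟨by simp; linarith [hy.1], hy.2.trans hb2⟩⟩,
      by simp; linarith [hy.1]⟩

/-- Data vanishing on `{p ≤ p₀}` and continuous are bounded on each `{p ≤ p₁}` by a multiple of any
exponential weight. -/
lemma exists_data_bound (S : CharSystem A κ V w P Q) {p₀ : ℝ}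
    (hw₀ : ∀ p ≤ p₀, w p (-p) = 0) (hP₀ : ∀ p ≤ p₀, P p (-p) = 0) (p₁ Λ : ℝ) :
    ∃ C, 0 ≤ C ∧ (∀ p ≤ p₁, |w p (-p)| ≤ C * Real.exp (Λ * p)) ∧
      ∀ p ≤ p₁, |P p (-p)| ≤ C * Real.exp (Λ * p) := by
  have aux : ∀ F : ℝ → ℝ → ℝ, Continuous (uncurry F) → (∀ p ≤ p₀, F p (-p) = 0) →
      ∃ C, ∀ p ≤ p₁, |F p (-p)| ≤ C * Real.exp (Λ * p) := by
    intro F hF hF0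
    have hc : Continuous (fun p => F p (-p) * Real.exp (-(Λ * p))) :=
      (hF.comp (continuous_id.prodMk continuous_neg)).mul (by fun_prop)
    obtain ⟨C, hC⟩ := (isCompact_Icc (a := p₀) (b := p₁)).exists_bound_of_continuousOn
      hc.continuousOn
    refine ⟨max C 0, fun p hp => ?_⟩
    rcases le_total p p₀ with h | h
    · rw [hF0 p h, abs_zero]; positivity
    · have h1 := (hC p ⟨h, hp⟩).trans (le_max_left C 0)
      rw [Real.norm_eq_abs, abs_mul, Real.abs_exp] at h1
      have h2 := mul_le_mul_of_nonneg_right h1 (Real.exp_pos (Λ * p)).le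
      rwa [mul_assoc, ← Real.exp_add, neg_add_cancel, Real.exp_zero, mul_one] at h2
  obtain ⟨C₁, h₁⟩ := aux w S.w_cont hw₀
  obtain ⟨C₂, h₂⟩ := aux P S.P_cont hP₀
  refine ⟨max (max C₁ C₂) 0, le_max_right _ _, fun p hp => (h₁ p hp).trans ?_,
    fun p hp => (h₂ p hp).trans ?_⟩
  · exact mul_le_mul_of_nonneg_right ((le_max_left _ _).trans (le_max_left _ _))
      (Real.exp_pos _).le
  · exact mul_le_mul_of_nonneg_right ((le_max_right _ _).trans (le_max_left _ _))
      (Real.exp_pos _).le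

/-- In `{p ≤ p₁, p + q ≥ 0}` the source `V w` decays like `exp (-κ q)`. -/
lemma exists_source_bound (S : CharSystem A κ V w P Q) {p₀ : ℝ}
    (hw₀ : ∀ p ≤ p₀, w p (-p) = 0) (hP₀ : ∀ p ≤ p₀, P p (-p) = 0) (p₁ : ℝ) :
    ∃ K, 0 ≤ K ∧ ∀ p q, p ≤ p₁ → 0 ≤ p + q → |V p q * w p q| ≤ K * Real.exp (-(κ * q)) := by
  set Λ := max 1 (2 * (A / κ * Real.exp (2 * κ * p₁)))
  obtain ⟨C, hC, h1, h2⟩ := S.exists_data_bound hw₀ hP₀ p₁ Λ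
  have hΛ : 1 ≤ Λ := le_max_left _ _
  have hA := S.A_nonneg
  have hκ := S.κ_pos
  refine ⟨A * (4 * C) * Real.exp (κ * p₁ + Λ * p₁), by positivity, fun p q hp hpq => ?_⟩
  have h3 := S.abs_source_le (S.abs_w_le hC hΛ (le_max_right _ _) h1 h2 hp hpq)
  refine h3.trans ?_
  calc A * Real.exp (κ * (p - q)) * (4 * C * Real.exp (Λ * p))
      = A * (4 * C) * Real.exp (κ * p + Λ * p) * Real.exp (-(κ * q)) := by
        rw [mul_sub, sub_eq_add_neg, Real.exp_add, Real.exp_add]; ring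
    _ ≤ A * (4 * C) * Real.exp (κ * p₁ + Λ * p₁) * Real.exp (-(κ * q)) := by
        gcongr

/-- Finite speed of propagation: `P` vanishes in the domain of dependence of `{p ≤ p₀}`. -/
lemma P_eq_zero (S : CharSystem A κ V w P Q) {p₀ : ℝ}
    (hw₀ : ∀ p ≤ p₀, w p (-p) = 0) (hP₀ : ∀ p ≤ p₀, P p (-p) = 0) {p q : ℝ}
    (hp : p ≤ p₀) (hpq : 0 ≤ p + q) : P p q = 0 := by
  set Λ := max 1 (2 * (A / κ * Real.exp (2 * κ * p₀)))
  have hw : ∀ y ∈ Icc (-p) q, |w p y| ≤ 0 * Real.exp (Λ * p) := by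
    intro y hy
    have := S.abs_w_le (C := 0) (p₁ := p₀) le_rfl (le_max_left _ _ : 1 ≤ Λ) (le_max_right _ _)
      (fun p hp => by simp [hw₀ p hp]) (fun p hp => by simp [hP₀ p hp]) hp
      (by linarith [hy.1] : 0 ≤ p + y)
    simpa using this
  have := S.abs_P_le (C := 0) hp hpq le_rfl (by simp [hP₀ p hp]) hw
  simpa using this

/-- `Q` vanishes at the horizon `q → ∞`, as it is the integral in `p` of an exponentially small
source over an interval of length `p + q`. -/
lemma tendsto_Q (S : CharSystem A κ V w P Q) {p₀ : ℝ}
    (hw₀ : ∀ p ≤ p₀, w p (-p) = 0) (hP₀ : ∀ p ≤ p₀, P p (-p) = 0)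
    (hQ₀ : ∀ p ≤ p₀, Q p (-p) = 0) (p : ℝ) :
    Tendsto (fun q => Q p q) atTop (nhds 0) := by
  obtain ⟨K, hK, hs⟩ := S.exists_source_bound hw₀ hP₀ p
  have hκ := S.κ_pos
  have hlim : Tendsto (fun q => K * (p * Real.exp (-(κ * q)) + q * Real.exp (-(κ * q))))
      atTop (nhds 0) := by
    have h0 : Tendsto (fun q : ℝ => κ * q) atTop atTop := tendsto_id.const_mul_atTop hκ
    have h1 : Tendsto (fun q : ℝ => Real.exp (-(κ * q))) atTop (nhds 0) :=
      Real.tendsto_exp_neg_atTop_nhds_zero.comp h0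
    have h2 : Tendsto (fun q : ℝ => q * Real.exp (-(κ * q))) atTop (nhds 0) := by
      have := ((Real.tendsto_pow_mul_exp_neg_atTop_nhds_zero 1).comp h0).const_mul κ⁻¹
      simp only [mul_zero] at this
      refine this.congr fun q => ?_
      simp only [comp_apply, pow_one]
      field_simp
    simpa using ((h1.const_mul p).add h2).const_mul K
  refine squeeze_zero_norm' ?_ hlim
  filter_upwards [eventually_ge_atTop (-p), eventually_ge_atTop (-p₀)] with q hq1 hq2
  have key := abs_le_of_abs_deriv_le (f := fun x => Q x q) (f' := fun x => V x q * w x q)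
    (G := fun x => K * Real.exp (-(κ * q)) * (x + q)) (G' := fun x => K * Real.exp (-(κ * q)))
    (a := -q) (b := p) (by linarith) (fun x => S.Q_p x q) ?_ ?_ ?_
  · rw [Real.norm_eq_abs]
    refine key.trans (le_of_eq ?_)
    ring
  · intro x
    simpa using ((hasDerivAt_id x).add_const q).const_mul (K * Real.exp (-(κ * q)))
  · have := hQ₀ (-q) (by linarith)
    rw [neg_neg] at this
    simp [this]
  · intro x hx
    exact hs x q hx.2 (by linarith [hx.1])

/-- Along each ingoing ray the increments of `P` are exponentially small, uniformly in `p ≤ p₁`. -/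
lemma exists_P_increment (S : CharSystem A κ V w P Q) {p₀ : ℝ}
    (hw₀ : ∀ p ≤ p₀, w p (-p) = 0) (hP₀ : ∀ p ≤ p₀, P p (-p) = 0) (p₁ : ℝ) :
    ∃ K, 0 ≤ K ∧ ∀ p q y, p ≤ p₁ → 0 ≤ p + q → q ≤ y →
      |P p y - P p q| ≤ K * Real.exp (-(κ * q)) := by
  obtain ⟨K, hK, hs⟩ := S.exists_source_bound hw₀ hP₀ p₁
  have hκ := S.κ_pos
  refine ⟨K / κ, by positivity, fun p q y hp hpq hqy => ?_⟩
  have key := abs_le_of_abs_deriv_le (f := fun y => P p y - P p q)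
    (f' := fun y => V p y * w p y)
    (G := fun y => K / κ * (Real.exp (-(κ * q)) - Real.exp (-(κ * y))))
    (G' := fun y => K * Real.exp (-(κ * y))) hqy
    (fun y => (S.P_q p y).sub_const _) ?_ ?_ ?_
  · refine key.trans ?_
    have : 0 ≤ K / κ * Real.exp (-(κ * y)) := by positivity
    linarith
  · intro y
    have h1 : HasDerivAt (fun y => Real.exp (-(κ * y))) (Real.exp (-(κ * y)) * (-(κ * 1))) y :=
      ((hasDerivAt_id y).const_mul κ).neg.exp
    refine ((h1.const_sub _).const_mul (K / κ)).congr_deriv ?_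
    field_simp
  · simp
  · intro z hz
    exact hs p z hp (by linarith [hz.1])

/-- The trace of `P` on the horizon `q → ∞` exists, is continuous, and vanishes for `p ≤ p₀`. -/
lemma exists_trace (S : CharSystem A κ V w P Q) {p₀ : ℝ}
    (hw₀ : ∀ p ≤ p₀, w p (-p) = 0) (hP₀ : ∀ p ≤ p₀, P p (-p) = 0) :
    ∃ g : ℝ → ℝ, Continuous g ∧ (∀ p, Tendsto (fun q => P p q) atTop (nhds (g p))) ∧
      ∀ p ≤ p₀, g p = 0 := by
  have hκ := S.κ_pos
  have hdecay : ∀ K : ℝ, Tendsto (fun q : ℝ => K * Real.exp (-(κ * q))) atTop (nhds 0) := by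
    intro K
    have h0 : Tendsto (fun q : ℝ => κ * q) atTop atTop := tendsto_id.const_mul_atTop hκ
    simpa using (Real.tendsto_exp_neg_atTop_nhds_zero.comp h0).const_mul K
  have hex : ∀ p, ∃ l, Tendsto (fun q => P p q) atTop (nhds l) := by
    intro p
    obtain ⟨K, hK, hinc⟩ := S.exists_P_increment hw₀ hP₀ p
    apply cauchySeq_tendsto_of_complete
    rw [Metric.cauchySeq_iff']
    intro δ hδ
    obtain ⟨q, hq1, hq2⟩ := (((hdecay K).eventually (gt_mem_nhds hδ)).and
      (eventually_ge_atTop (-p))).exists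
    exact ⟨q, fun y hy => (hinc p q y le_rfl (by linarith) hy).trans_lt hq1⟩
  choose g hg using hex
  refine ⟨g, ?_, hg, fun p hp => ?_⟩
  · rw [continuous_iff_continuousAt]
    intro p
    obtain ⟨K, hK, hinc⟩ := S.exists_P_increment hw₀ hP₀ (p + 1)
    -- uniform convergence on `(p - 1, p + 1)`
    have hunif : TendstoUniformlyOn (fun q x => P x q) g atTop (Ioo (p - 1) (p + 1)) := by
      rw [Metric.tendstoUniformlyOn_iff]
      intro δ hδ
      filter_upwards [(hdecay K).eventually (gt_mem_nhds hδ),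
        eventually_ge_atTop (-(p - 1))] with q hq1 hq2 x hx
      refine lt_of_le_of_lt ?_ hq1
      have hlim : Tendsto (fun y => |P x y - P x q|) atTop (nhds |g x - P x q|) :=
        ((hg x).sub_const _).abs
      refine le_of_tendsto hlim ?_
      filter_upwards [eventually_ge_atTop q] with y hy
      exact hinc x q y hx.2.le (by linarith [hx.1]) hy
    have hcont : ContinuousOn g (Ioo (p - 1) (p + 1)) :=
      hunif.continuousOn (Frequently.of_forall fun q =>
        (S.P_cont.comp (continuous_id.prodMk continuous_const)).continuousOn)
    exact hcont.continuousAt (Ioo_mem_nhds (by linarith) (by linarith))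
  · refine tendsto_nhds_unique (hg p) (tendsto_const_nhds.congr' ?_)
    filter_upwards [eventually_ge_atTop (-p)] with q hq
    exact (S.P_eq_zero hw₀ hP₀ hp (by linarith)).symm

end CharSystem

/-! ### The tortoise coordinate -/

lemma hasDerivAt_rstar {M r : ℝ} (hr : 2 * M < r) :
    HasDerivAt (rstar M) (1 + 2 * M / (r - 2 * M)) r := by
  have h : HasDerivAt (fun r => Real.log (r - 2 * M)) (1 / (r - 2 * M)) r :=
    ((hasDerivAt_id r).sub_const (2 * M)).log (by simp; linarith)
  refine ((hasDerivAt_id r).add (h.const_mul (2 * M))).congr_deriv ?_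
  ring

lemma strictMonoOn_rstar {M : ℝ} (hM : 0 < M) : StrictMonoOn (rstar M) (Ioi (2 * M)) := by
  intro a ha b hb hab
  simp only [mem_Ioi] at ha hb
  have := Real.log_lt_log (by linarith : 0 < a - 2 * M) (by linarith : a - 2 * M < b - 2 * M)
  unfold rstar
  nlinarith

lemma exists_rstar_eq {M : ℝ} (hM : 0 < M) (s : ℝ) : ∃ r, 2 * M < r ∧ rstar M r = s := by
  -- `rstar` is below `s` at `2M + exp (-k)` and above `s` at `2M + 1 + |s|`
  set k := max 0 ((2 * M + 1 - s) / (2 * M)) with hk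
  have hk0 : 0 ≤ k := le_max_left _ _
  have hk1 : 2 * M + 1 - s ≤ 2 * M * k := by
    have := le_max_right 0 ((2 * M + 1 - s) / (2 * M))
    rw [← hk, div_le_iff₀ (by linarith)] at this
    linarith
  have he : 0 < Real.exp (-k) := Real.exp_pos _
  have he1 : Real.exp (-k) ≤ 1 := Real.exp_le_one_iff.2 (by linarith)
  have hle : 2 * M + Real.exp (-k) ≤ 2 * M + 1 + |s| := by linarith [abs_nonneg s]
  have hcont : ContinuousOn (rstar M) (Icc (2 * M + Real.exp (-k)) (2 * M + 1 + |s|)) :=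
    fun x hx => (hasDerivAt_rstar (by linarith [hx.1])).continuousAt.continuousWithinAt
  have hlow : rstar M (2 * M + Real.exp (-k)) ≤ s := by
    unfold rstar
    rw [add_sub_cancel_left, Real.log_exp]
    linarith
  have hhigh : s ≤ rstar M (2 * M + 1 + |s|) := by
    unfold rstar
    have : 0 ≤ Real.log (2 * M + 1 + |s| - 2 * M) :=
      Real.log_nonneg (by linarith [abs_nonneg s])
    have : 0 ≤ 2 * M * Real.log (2 * M + 1 + |s| - 2 * M) := by positivity
    linarith [le_abs_self s]
  obtain ⟨r, hr, hrs⟩ := intermediate_value_Icc hle hcont ⟨hlow, hhigh⟩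
  exact ⟨r, by linarith [hr.1], hrs⟩

/-- The area radius as a function of the tortoise coordinate: `dr/dr_* = 1 - 2M/r`. -/
lemma exists_rstar_inverse {M : ℝ} (hM : 0 < M) :
    ∃ R : ℝ → ℝ, (∀ s, 2 * M < R s) ∧ (∀ s, rstar M (R s) = s) ∧
      (∀ r, 2 * M < r → R (rstar M r) = r) ∧ Monotone R ∧
      ∀ s, HasDerivAt R ((R s - 2 * M) / R s) s := by
  choose R hR hRs using exists_rstar_eq hM
  have hleft : ∀ r, 2 * M < r → R (rstar M r) = r := fun r hr =>
    (strictMonoOn_rstar hM).injOn (hR _) hr (hRs _)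
  have hmono : Monotone R := by
    intro a b hab
    rw [← (strictMonoOn_rstar hM).le_iff_le (hR a) (hR b), hRs, hRs]
    exact hab
  have himage : R '' univ = Ioi (2 * M) := by
    ext r
    constructor
    · rintro ⟨s, -, rfl⟩
      exact hR s
    · exact fun hr => ⟨rstar M r, trivial, hleft r hr⟩
  refine ⟨R, hR, hRs, hleft, hmono, fun s => ?_⟩
  have hcont : ContinuousAt R s :=
    continuousAt_of_monotoneOn_of_image_mem_nhds (hmono.monotoneOn univ) univ_mem
      (himage ▸ Ioi_mem_nhds (hR s))
  have hpos : 0 < R s - 2 * M := by linarith [hR s]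
  have hpos' : 0 < R s := by linarith [hR s]
  have hval : 1 + 2 * M / (R s - 2 * M) = R s / (R s - 2 * M) := by
    field_simp
    ring
  have h := HasDerivAt.of_local_left_inverse hcont (hasDerivAt_rstar (hR s))
    (by rw [hval]; positivity) (Eventually.of_forall hRs)
  rwa [hval, inv_div] at h

/-! ### Partial derivatives on the exterior -/

/-- The exterior `ℝ × (2M, ∞)`. -/
def exterior (M : ℝ) : Set (ℝ × ℝ) := univ ×ˢ Ioi (2 * M)

lemma isOpen_exterior (M : ℝ) : IsOpen (exterior M) := isOpen_univ.prod isOpen_Ioi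

/-- Chain rule for a function on the exterior along a curve. -/
lemma hasDerivAt_curve {M : ℝ} {F : ℝ → ℝ → ℝ} (hF : ContDiffOn ℝ ∞ (uncurry F) (exterior M))
    {a b : ℝ → ℝ} {a' b' x : ℝ} (ha : HasDerivAt a a' x) (hb : HasDerivAt b b' x)
    (hx : 2 * M < b x) :
    HasDerivAt (fun y => F (a y) (b y)) (fderiv ℝ (uncurry F) (a x, b x) (a', b')) x := by
  have hd : DifferentiableAt ℝ (uncurry F) (a x, b x) :=
    (hF.contDiffAt ((isOpen_exterior M).mem_nhds (mk_mem_prod trivial hx))).differentiableAt (by simp)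
  exact hd.hasFDerivAt.comp_hasDerivAt x (ha.prodMk hb)

lemma hasDerivAt_t {M : ℝ} {F : ℝ → ℝ → ℝ} (hF : ContDiffOn ℝ ∞ (uncurry F) (exterior M))
    {t r : ℝ} (hr : 2 * M < r) :
    HasDerivAt (fun s => F s r) (fderiv ℝ (uncurry F) (t, r) (1, 0)) t :=
  hasDerivAt_curve hF (hasDerivAt_id t) (hasDerivAt_const t r) hr

lemma hasDerivAt_r {M : ℝ} {F : ℝ → ℝ → ℝ} (hF : ContDiffOn ℝ ∞ (uncurry F) (exterior M))
    {t r : ℝ} (hr : 2 * M < r) :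
    HasDerivAt (fun s => F t s) (fderiv ℝ (uncurry F) (t, r) (0, 1)) r :=
  hasDerivAt_curve hF (hasDerivAt_const r t) (hasDerivAt_id r) hr

/-- Chain rule along a curve, in terms of the partial derivatives `pdt` and `pdr`. -/
lemma hasDerivAt_curve' {M : ℝ} {F : ℝ → ℝ → ℝ} (hF : ContDiffOn ℝ ∞ (uncurry F) (exterior M))
    {a b : ℝ → ℝ} {a' b' x : ℝ} (ha : HasDerivAt a a' x) (hb : HasDerivAt b b' x)
    (hx : 2 * M < b x) :
    HasDerivAt (fun y => F (a y) (b y))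
      (a' * pdt F (a x) (b x) + b' * pdr F (a x) (b x)) x := by
  refine (hasDerivAt_curve hF ha hb hx).congr_deriv ?_
  have h : ((a', b') : ℝ × ℝ) = a' • ((1, 0) : ℝ × ℝ) + b' • ((0, 1) : ℝ × ℝ) := by simp
  rw [h, map_add, map_smul, map_smul, pdt, pdr, (hasDerivAt_t hF hx).deriv,
    (hasDerivAt_r hF hx).deriv]
  simp

lemma contDiffOn_fderiv_apply {M : ℝ} {F : ℝ → ℝ → ℝ}
    (hF : ContDiffOn ℝ ∞ (uncurry F) (exterior M)) (v : ℝ × ℝ) :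
    ContDiffOn ℝ ∞ (fun z => fderiv ℝ (uncurry F) z v) (exterior M) :=
  (hF.fderiv_of_isOpen (isOpen_exterior M) (by simp)).clm_apply contDiffOn_const

lemma contDiffOn_pdt {M : ℝ} {F : ℝ → ℝ → ℝ} (hF : ContDiffOn ℝ ∞ (uncurry F) (exterior M)) :
    ContDiffOn ℝ ∞ (uncurry (pdt F)) (exterior M) :=
  (contDiffOn_fderiv_apply hF (1, 0)).congr fun _ hz => (hasDerivAt_t hF hz.2).deriv

lemma contDiffOn_pdr {M : ℝ} {F : ℝ → ℝ → ℝ} (hF : ContDiffOn ℝ ∞ (uncurry F) (exterior M)) :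
    ContDiffOn ℝ ∞ (uncurry (pdr F)) (exterior M) :=
  (contDiffOn_fderiv_apply hF (0, 1)).congr fun _ hz => (hasDerivAt_r hF hz.2).deriv

/-- Symmetry of mixed partial derivatives. -/
lemma pdr_pdt_eq {M : ℝ} {F : ℝ → ℝ → ℝ} (hF : ContDiffOn ℝ ∞ (uncurry F) (exterior M))
    {t r : ℝ} (hr : 2 * M < r) : pdr (pdt F) t r = pdt (pdr F) t r := by
  have hat : ContDiffAt ℝ ∞ (uncurry F) (t, r) :=
    hF.contDiffAt ((isOpen_exterior M).mem_nhds (mk_mem_prod trivial hr))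
  have hd : DifferentiableAt ℝ (fderiv ℝ (uncurry F)) (t, r) :=
    ((hF.fderiv_of_isOpen (m := ∞) (isOpen_exterior M) (by simp)).contDiffAt
      ((isOpen_exterior M).mem_nhds (mk_mem_prod trivial hr))).differentiableAt (by simp)
  have hsymm : IsSymmSndFDerivAt ℝ (uncurry F) (t, r) :=
    hat.isSymmSndFDerivAt (by
      rw [minSmoothness_of_isRCLikeNormedField]
      exact WithTop.coe_le_coe.2 (le_top : (2 : ℕ∞) ≤ ⊤))
  have hD : ∀ v : ℝ × ℝ, HasFDerivAt (fun z => fderiv ℝ (uncurry F) z v)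
      ((fderiv ℝ (fderiv ℝ (uncurry F)) (t, r)).flip v) (t, r) := by
    intro v
    simpa using hd.hasFDerivAt.clm_apply (hasFDerivAt_const v (t, r))
  have h1 : pdr (pdt F) t r = fderiv ℝ (fderiv ℝ (uncurry F)) (t, r) (0, 1) (1, 0) := by
    have h := (hD (1, 0)).comp_hasDerivAt r ((hasDerivAt_const r t).prodMk (hasDerivAt_id r))
    refine (h.congr_of_eventuallyEq ?_).deriv
    filter_upwards [Ioi_mem_nhds hr] with s hs
    exact (hasDerivAt_t hF hs).deriv
  have h2 : pdt (pdr F) t r = fderiv ℝ (fderiv ℝ (uncurry F)) (t, r) (1, 0) (0, 1) := by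
    have h := (hD (0, 1)).comp_hasDerivAt t ((hasDerivAt_id t).prodMk (hasDerivAt_const t r))
    refine (h.congr_of_eventuallyEq ?_).deriv
    exact Eventually.of_forall fun s => (hasDerivAt_r hF hr).deriv
  rw [h1, h2]
  exact hsymm _ _

/-! ### The mode equation in characteristic form -/

/-- The null derivative `½ (∂ₜ + σ ∂_{r_*}) (r u)`, with `∂_{r_*} = (1 - 2M/r) ∂ᵣ`; the sign
`σ = 1` gives `∂/∂p` and `σ = -1` gives `∂/∂q` for `p = t + r_*`, `q = t - r_*`. -/
noncomputable def nullDeriv (M σ : ℝ) (u : ℝ → ℝ → ℝ) (t r : ℝ) : ℝ :=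
  (r * pdt u t r + σ * ((r - 2 * M) / r * u t r + (r - 2 * M) * pdr u t r)) / 2

/-- The coefficient in `∂²(ru)/∂p∂q = modePotential · (ru)`, that is, minus a quarter of the
Regge-Wheeler potential `(1 - 2M/r) (λ²/r² + 2M/r³)`. -/
noncomputable def modePotential (M lam r : ℝ) : ℝ :=
  -((r - 2 * M) / r * (lam ^ 2 / r ^ 2 + 2 * M / r ^ 3) / 4)

/-- Derivative of `r u` along a null ray. -/
lemma hasDerivAt_ru {M σ : ℝ} (hM : 0 < M) {u : ℝ → ℝ → ℝ}
    (hu : ContDiffOn ℝ ∞ (uncurry u) (exterior M)) {a b : ℝ → ℝ} {x : ℝ}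
    (ha : HasDerivAt a (1 / 2) x) (hx : 2 * M < b x)
    (hb : HasDerivAt b (σ / 2 * ((b x - 2 * M) / b x)) x) :
    HasDerivAt (fun y => b y * u (a y) (b y)) (nullDeriv M σ u (a x) (b x)) x := by
  have hb0 : b x ≠ 0 := by linarith
  refine (hb.mul (hasDerivAt_curve' hu ha hb hx)).congr_deriv ?_
  unfold nullDeriv
  field_simp
  ring

/-- The mode equation in characteristic form: differentiating one null derivative of `r u` along
the rays of the other family leaves only the potential term. -/
lemma hasDerivAt_nullDeriv {M lam σ : ℝ} (hM : 0 < M) (hσ : σ ^ 2 = 1) {u : ℝ → ℝ → ℝ}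
    (hu : IsModeSolution M lam u) {a b : ℝ → ℝ} {x : ℝ}
    (ha : HasDerivAt a (1 / 2) x) (hx : 2 * M < b x)
    (hb : HasDerivAt b (-σ / 2 * ((b x - 2 * M) / b x)) x) :
    HasDerivAt (fun y => nullDeriv M σ u (a y) (b y))
      (modePotential M lam (b x) * (b x * u (a x) (b x))) x := by
  have hb0 : b x ≠ 0 := by linarith
  have hb1 : b x - 2 * M ≠ 0 := by linarith
  have hs : ContDiffOn ℝ ∞ (uncurry u) (exterior M) := hu.1
  have h0 := hasDerivAt_curve' hs ha hb hx
  have h1 := hasDerivAt_curve' (contDiffOn_pdt hs) ha hb hx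
  have h2 := hasDerivAt_curve' (contDiffOn_pdr hs) ha hb hx
  have hbM := hb.sub_const (2 * M)
  have key := ((hb.mul h1).add
    ((((hbM.div hb hb0).mul h0).add (hbM.mul h2)).const_mul σ)).div_const 2
  refine key.congr_deriv ?_
  have pde := hu.2 (a x) (b x) hx
  rw [pdr_pdt_eq hs hx, Pi.div_apply]
  change -(b x / (b x - 2 * M)) * pdt (pdt u) (a x) (b x) +
    (b x - 2 * M) / b x * pdr (pdr u) (a x) (b x) + _ - _ = 0 at pde
  unfold modePotential
  generalize pdt (pdt u) (a x) (b x) = utt at *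
  generalize pdr (pdr u) (a x) (b x) = urr at *
  generalize pdt (pdr u) (a x) (b x) = utr at *
  generalize pdr u (a x) (b x) = ur at *
  generalize pdt u (a x) (b x) = ut at *
  generalize u (a x) (b x) = u0 at *
  generalize b x = r at *
  -- the mode equation solved for the second time derivative
  have hutt : utt = (r - 2 * M) / r *
      ((r - 2 * M) / r * urr + 2 * (r - M) / r ^ 2 * ur - lam ^ 2 / r ^ 2 * u0) := by
    field_simp at pde ⊢
    linear_combination -pde
  rw [hutt]
  field_simp
  ring_nf
  simp only [hσ]
  ring

/-- Near the horizon `r - 2M` is exponentially small in the tortoise coordinate, hence so is the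
potential. -/
lemma abs_modePotential_le {M lam r : ℝ} (hM : 0 < M) (hr : 2 * M < r) :
    |modePotential M lam r| ≤
      1 / (2 * M) * (lam ^ 2 / (2 * M) ^ 2 + 2 * M / (2 * M) ^ 3) / 4 *
        Real.exp (rstar M r / (2 * M)) := by
  have hpos : 0 < r - 2 * M := by linarith
  have hr0 : 0 < r := by linarith
  have hexp : r - 2 * M ≤ Real.exp (rstar M r / (2 * M)) := by
    rw [← Real.log_le_iff_le_exp hpos, le_div_iff₀ (by linarith)]
    unfold rstar
    linarith
  have h1 : |modePotential M lam r| =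
      1 / r * (lam ^ 2 / r ^ 2 + 2 * M / r ^ 3) / 4 * (r - 2 * M) := by
    unfold modePotential
    rw [abs_neg, abs_of_nonneg (by positivity)]
    ring
  rw [h1]
  gcongr

/-- The mode equation for `r u` in the coordinates `p = t + r_*`, `q = t - r_*`. -/
lemma charSystem_of_isModeSolution {M lam : ℝ} (hM : 0 < M) {u : ℝ → ℝ → ℝ}
    (hu : IsModeSolution M lam u) {R : ℝ → ℝ} (hR : ∀ s, 2 * M < R s)
    (hRs : ∀ s, rstar M (R s) = s) (hR' : ∀ s, HasDerivAt R ((R s - 2 * M) / R s) s) :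
    CharSystem (1 / (2 * M) * (lam ^ 2 / (2 * M) ^ 2 + 2 * M / (2 * M) ^ 3) / 4) (1 / (4 * M))
      (fun p q => modePotential M lam (R ((p - q) / 2)))
      (fun p q => R ((p - q) / 2) * u ((p + q) / 2) (R ((p - q) / 2)))
      (fun p q => nullDeriv M 1 u ((p + q) / 2) (R ((p - q) / 2)))
      (fun p q => nullDeriv M (-1) u ((p + q) / 2) (R ((p - q) / 2))) := by
  have hs : ContDiffOn ℝ ∞ (uncurry u) (exterior M) := hu.1
  have hRc : Continuous R := continuous_iff_continuousAt.2 fun s => (hR' s).continuousAt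
  have hb : Continuous (fun z : ℝ × ℝ => R ((z.1 - z.2) / 2)) := hRc.comp (by fun_prop)
  have hb0 : ∀ z : ℝ × ℝ, R ((z.1 - z.2) / 2) ≠ 0 := fun z => by
    linarith [hR ((z.1 - z.2) / 2)]
  have hc : ∀ F : ℝ → ℝ → ℝ, ContDiffOn ℝ ∞ (uncurry F) (exterior M) →
      Continuous (fun z : ℝ × ℝ => F ((z.1 + z.2) / 2) (R ((z.1 - z.2) / 2))) := by
    intro F hF
    exact hF.continuousOn.comp_continuous (f := fun z : ℝ × ℝ =>
      ((z.1 + z.2) / 2, R ((z.1 - z.2) / 2))) ((by fun_prop : Continuous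
        (fun z : ℝ × ℝ => (z.1 + z.2) / 2)).prodMk hb) fun z => mk_mem_prod trivial (hR _)
  have hap : ∀ p q : ℝ, HasDerivAt (fun x => (x + q) / 2) (1 / 2) p := fun p q =>
    ((hasDerivAt_id p).add_const q).div_const 2
  have haq : ∀ p q : ℝ, HasDerivAt (fun y => (p + y) / 2) (1 / 2) q := fun p q =>
    ((hasDerivAt_id q).const_add p).div_const 2
  have hbp : ∀ p q : ℝ, HasDerivAt (fun x => R ((x - q) / 2))
      (1 / 2 * ((R ((p - q) / 2) - 2 * M) / R ((p - q) / 2))) p := fun p q =>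
    ((hR' ((p - q) / 2)).comp p (((hasDerivAt_id p).sub_const q).div_const 2)).congr_deriv
      (by ring)
  have hbq : ∀ p q : ℝ, HasDerivAt (fun y => R ((p - y) / 2))
      (-1 / 2 * ((R ((p - q) / 2) - 2 * M) / R ((p - q) / 2))) q := fun p q =>
    ((hR' ((p - q) / 2)).comp q (((hasDerivAt_id q).const_sub p).div_const 2)).congr_deriv
      (by ring)
  refine ⟨by positivity, by positivity, fun p q => ?_, hb.mul (hc u hs), ?_, fun p q => ?_,
    fun p q => ?_, fun p q => ?_⟩
  · have h := abs_modePotential_le (lam := lam) hM (hR ((p - q) / 2))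
    rw [hRs] at h
    have : (p - q) / 2 / (2 * M) = 1 / (4 * M) * (p - q) := by
      field_simp
      ring
    rwa [this] at h
  · have h1 := hc _ (contDiffOn_pdt hs)
    have h2 := hc _ (contDiffOn_pdr hs)
    have h3 := hb.sub (continuous_const (y := 2 * M))
    exact ((hb.mul h1).add (continuous_const.mul
      (((h3.div hb hb0).mul (hc u hs)).add (h3.mul h2)))).div_const 2
  · exact hasDerivAt_ru (σ := 1) hM hs (hap p q) (hR _) (hbp p q)
  · exact hasDerivAt_nullDeriv (σ := 1) hM (by norm_num) hu (haq p q) (hR _) (hbq p q)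
  · exact hasDerivAt_nullDeriv (σ := -1) hM (by norm_num) hu (hap p q) (hR _)
      ((hbp p q).congr_deriv (by ring))

/-- If `u(0, ·)` vanishes on `(2M, a]`, so does its derivative; at the endpoint `a` because the
left derivative vanishes. -/
lemma pdr_eq_zero {M a r : ℝ} {u : ℝ → ℝ → ℝ} (hs : ContDiffOn ℝ ∞ (uncurry u) (exterior M))
    (hφ : ∀ r : ℝ, 2 * M < r → r ≤ a → u 0 r = 0) (hr : 2 * M < r) (hra : r ≤ a) :
    pdr u 0 r = 0 := by
  have h1 : HasDerivAt (fun s => u 0 s) (pdr u 0 r) r :=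
    (hasDerivAt_r hs hr).differentiableAt.hasDerivAt
  have h2 : HasDerivWithinAt (fun s => u 0 s) 0 (Iic r) r := by
    refine (hasDerivWithinAt_const r (Iic r) (0 : ℝ)).congr_of_eventuallyEq ?_ (hφ r hr hra)
    filter_upwards [mem_nhdsWithin_of_mem_nhds (Ioi_mem_nhds hr), self_mem_nhdsWithin]
      with s hs1 hs2
    exact hφ s hs1 (le_trans hs2 hra)
  exact (uniqueDiffWithinAt_Iic r).eq_deriv _ h1.hasDerivWithinAt h2

/-! ### The radiation field -/

lemma tendsto_rstar_horizon {M : ℝ} (hM : 0 < M) :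
    Tendsto (rstar M) (nhdsWithin (2 * M) (Ioi (2 * M))) atBot := by
  have h1 : Tendsto (fun r : ℝ => r - 2 * M) (nhdsWithin (2 * M) (Ioi (2 * M)))
      (nhdsWithin 0 (Ioi 0)) := by
    refine tendsto_nhdsWithin_iff.2 ⟨?_, ?_⟩
    · have : Tendsto (fun r : ℝ => r - 2 * M) (nhds (2 * M)) (nhds (2 * M - 2 * M)) :=
        tendsto_id.sub_const _
      rw [sub_self] at this
      exact this.mono_left nhdsWithin_le_nhds
    · filter_upwards [self_mem_nhdsWithin] with r hr
      exact sub_pos.2 (mem_Ioi.1 hr)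
  have h2 := (Real.tendsto_log_nhdsGT_zero.comp h1).const_mul_atBot (by linarith : 0 < 2 * M)
  exact (tendsto_id.mono_left nhdsWithin_le_nhds).add_atBot h2

/-- Existence of the event-horizon component of the forward radiation field for data
supported away from the horizon (single mode), together with its vanishing for
`τ ≤ r_*(2M+ε) = 2M + ε + 2M·log ε` by finite speed of propagation. -/
theorem radiation_field_exists_event_horizon
    (M lam ε : ℝ) (hM : 0 < M) (hlam : 0 ≤ lam) (hε : ε ∈ Set.Ioo (0:ℝ) 1)
    (u : ℝ → ℝ → ℝ) (hu : IsModeSolution M lam u)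
    (hφ : ∀ r : ℝ, 2*M < r → r ≤ 2*M + ε → u 0 r = 0)
    (hψ : ∀ r : ℝ, 2*M < r → r ≤ 2*M + ε → pdt u 0 r = 0) :
    ∃ f : ℝ → ℝ, Continuous f ∧ IsFwdRadHorizon M u f ∧
      ∀ τ : ℝ, τ ≤ 2*M + ε + 2*M*Real.log ε → f τ = 0 := by
  obtain ⟨R, hR, hRs, hRinv, hRmono, hR'⟩ := exists_rstar_inverse hM
  have hs : ContDiffOn ℝ ∞ (uncurry u) (exterior M) := hu.1
  have S := charSystem_of_isModeSolution hM hu hR hRs hR'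
  set p₀ := 2*M + ε + 2*M*Real.log ε with hp₀
  have hp₀' : rstar M (2*M + ε) = p₀ := by
    unfold rstar
    rw [add_sub_cancel_left]
  have hRle : ∀ p ≤ p₀, R p ≤ 2*M + ε := by
    intro p hp
    have h := hRmono hp
    rwa [← hp₀', hRinv _ (by linarith [hε.1])] at h
  -- on the line `p + q = 0` one has `t = 0` and `r_* = p`
  have hline : ∀ p : ℝ, (p + -p) / 2 = 0 ∧ (p - -p) / 2 = p := fun p => by
    constructor <;> ring
  have hnull : ∀ σ, ∀ p ≤ p₀, nullDeriv M σ u ((p + -p) / 2) (R ((p - -p) / 2)) = 0 := by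
    intro σ p hp
    rw [(hline p).1, (hline p).2]
    have h1 := hφ (R p) (hR p) (hRle p hp)
    have h2 := hψ (R p) (hR p) (hRle p hp)
    have h3 := pdr_eq_zero hs hφ (hR p) (hRle p hp)
    simp [nullDeriv, h1, h2, h3]
  have hw₀ : ∀ p ≤ p₀, R ((p - -p) / 2) * u ((p + -p) / 2) (R ((p - -p) / 2)) = 0 := by
    intro p hp
    rw [(hline p).1, (hline p).2, hφ (R p) (hR p) (hRle p hp), mul_zero]
  obtain ⟨g, hgc, hg, hg0⟩ := S.exists_trace hw₀ (hnull 1)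
  have hQ := S.tendsto_Q hw₀ (hnull 1) (hnull (-1))
  refine ⟨fun τ => g τ / (2*M), hgc.div_const _, fun τ => ?_, fun τ hτ => by
    simp [hg0 τ hτ]⟩
  have hq : Tendsto (fun r => τ - 2 * rstar M r) (nhdsWithin (2*M) (Ioi (2*M))) atTop := by
    have h := (tendsto_rstar_horizon hM).const_mul_atBot_of_neg (by norm_num : (-2 : ℝ) < 0)
    refine (tendsto_atTop_add_const_left _ τ h).congr fun r => ?_
    ring
  -- `r ∂ₜu` is the sum of the two null derivatives, and the one in `q` tends to zero
  have hlim := (((hg τ).comp hq).add ((hQ τ).comp hq)).div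
    (tendsto_id.mono_left nhdsWithin_le_nhds :
      Tendsto (fun r : ℝ => r) (nhdsWithin (2*M) (Ioi (2*M))) (nhds (2*M))) (by positivity)
  rw [add_zero] at hlim
  refine hlim.congr' ?_
  filter_upwards [self_mem_nhdsWithin] with r hr
  have hr0 : r ≠ 0 := by
    have : 2 * M < r := hr
    linarith
  have e1 : (τ + (τ - 2 * rstar M r)) / 2 = τ - rstar M r := by ring
  have e2 : (τ - (τ - 2 * rstar M r)) / 2 = rstar M r := by ring
  simp only [Pi.div_apply, comp_apply, id_eq, e1, e2, hRinv r hr, nullDeriv]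
  field_simp
  ring
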